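/- For any α ∈ ℂ, set 𝐋₀ = −ℒ_0^α + (1/2)(1−α)H_0 ∈ S(2,α). Then for every basis element s of S'(2,α), [𝐋₀, s] = (deg s)·s, where deg ℒ_n^α = deg H_n = deg 𝔥_n^α = deg 𝔭_n = n, deg E_n = deg 𝔵_n = n + 1 − α, and deg F_n = deg 𝔶_n^α = n − 1 + α. In particular, the grading deg of S'(2,α) by ℤ ± α is the eigenvalue decomposition of ad 𝐋₀. -/

import Mathlib

noncomputable section

/-- The Laurent polynomial ring `ℂ[t,t⁻¹]`, as the space of finitely supported
functions `ℤ →₀ ℂ` (the function `f` represents `Σ_n f(n)tⁿ`). -/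
abbrev Lau : Type := ℤ →₀ ℂ

/-- The supercommutative superalgebra `A = ℂ[t,t⁻¹] ⊗ Λ(θ₁,θ₂)`, an element
`(a,b,c,d)` representing `a + bθ₁ + cθ₂ + dθ₁θ₂`. -/
abbrev GA : Type := Lau × Lau × Lau × Lau

/-- The derivative `∂_t` on `ℂ[t,t⁻¹]`: `tⁿ ↦ n tⁿ⁻¹`. -/
def tder : Lau →ₗ[ℂ] Lau :=
  Finsupp.lsum ℂ fun n => (n : ℂ) • Finsupp.lsingle (n - 1)

/-- Multiplication by `t^k` on `ℂ[t,t⁻¹]`. -/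
def tshift (k : ℤ) : Lau →ₗ[ℂ] Lau := Finsupp.lmapDomain ℂ ℂ (· + k)

/-- Components of `A`. -/
def pr0 : GA →ₗ[ℂ] Lau := LinearMap.fst ℂ Lau (Lau × Lau × Lau)
def pr1 : GA →ₗ[ℂ] Lau :=
  (LinearMap.fst ℂ Lau (Lau × Lau)).comp (LinearMap.snd ℂ Lau (Lau × Lau × Lau))
def pr2 : GA →ₗ[ℂ] Lau :=
  ((LinearMap.fst ℂ Lau Lau).comp (LinearMap.snd ℂ Lau (Lau × Lau))).comp
    (LinearMap.snd ℂ Lau (Lau × Lau × Lau))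
def pr3 : GA →ₗ[ℂ] Lau :=
  ((LinearMap.snd ℂ Lau Lau).comp (LinearMap.snd ℂ Lau (Lau × Lau))).comp
    (LinearMap.snd ℂ Lau (Lau × Lau × Lau))

/-- Build an endomorphism of `A` from its four components. -/
def mk4 (f0 f1 f2 f3 : GA →ₗ[ℂ] Lau) : Module.End ℂ GA :=
  f0.prod (f1.prod (f2.prod f3))

/-- The even derivation `∂_t` of `A`. -/
def Dt : Module.End ℂ GA :=
  mk4 (tder.comp pr0) (tder.comp pr1) (tder.comp pr2) (tder.comp pr3)

/-- The odd (left) derivation `∂₁ = ∂/∂θ₁` of `A`. -/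
def Dθ1 : Module.End ℂ GA := mk4 pr1 0 pr3 0

/-- The odd (left) derivation `∂₂ = ∂/∂θ₂` of `A`. -/
def Dθ2 : Module.End ℂ GA := mk4 pr2 (-pr3) 0 0

/-- Multiplication by `θ₁` on `A`. -/
def Mθ1 : Module.End ℂ GA := mk4 0 pr0 0 pr2

/-- Multiplication by `θ₂` on `A`. -/
def Mθ2 : Module.End ℂ GA := mk4 0 0 pr0 (-pr1)

/-- Multiplication by `t^k` on `A`. -/
def Mt (k : ℤ) : Module.End ℂ GA :=
  mk4 ((tshift k).comp pr0) ((tshift k).comp pr1) ((tshift k).comp pr2) ((tshift k).comp pr3)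

/-- `ℒ_n^α = −tⁿ(t∂_t + (1/2)(n+α+1)(θ₁∂₁ + θ₂∂₂))`. -/
def Lop (α : ℂ) (n : ℤ) : Module.End ℂ GA :=
  -(Mt (n + 1) * Dt + (((n : ℂ) + α + 1) / 2) • (Mt n * (Mθ1 * Dθ1 + Mθ2 * Dθ2)))

/-- `E_n = tⁿθ₂∂₁`. -/
def Eop (n : ℤ) : Module.End ℂ GA := Mt n * Mθ2 * Dθ1

/-- `H_n = tⁿ(θ₂∂₂ − θ₁∂₁)`. -/
def Hop (n : ℤ) : Module.End ℂ GA := Mt n * Mθ2 * Dθ2 - Mt n * Mθ1 * Dθ1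

/-- `F_n = tⁿθ₁∂₂`. -/
def Fop (n : ℤ) : Module.End ℂ GA := Mt n * Mθ1 * Dθ2

/-- `𝔥_n^α = tⁿθ₂∂_t − (n+α)tⁿ⁻¹θ₁θ₂∂₁`. -/
def hop (α : ℂ) (n : ℤ) : Module.End ℂ GA :=
  Mt n * Mθ2 * Dt - ((n : ℂ) + α) • (Mt (n - 1) * Mθ1 * Mθ2 * Dθ1)

/-- `𝔭_n = −tⁿ⁺¹∂₂`. -/
def pop (n : ℤ) : Module.End ℂ GA := -(Mt (n + 1) * Dθ2)

/-- `𝔵_n = tⁿ⁺¹∂₁`. -/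
def xop (n : ℤ) : Module.End ℂ GA := Mt (n + 1) * Dθ1

/-- `𝔶_n^α = tⁿθ₁∂_t + (n+α)tⁿ⁻¹θ₁θ₂∂₂`. -/
def yop (α : ℂ) (n : ℤ) : Module.End ℂ GA :=
  Mt n * Mθ1 * Dt + ((n : ℂ) + α) • (Mt (n - 1) * Mθ1 * Mθ2 * Dθ2)

/-!
The element `𝐋₀` is the Euler operator `t∂_t + αθ₁∂₁ + θ₂∂₂`, which acts diagonally on the monomials
of `A`. Hence the elementary operators `tᵏ, ∂_t, θ₁, ∂₁, θ₂, ∂₂` are eigenvectors of `ad 𝐋₀`, with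
eigenvalues `k, -1, α, -α, 1, -1`. Since `ad 𝐋₀` is a derivation, eigenvalues add up in products,
and each element of the basis is a combination of products of one and the same total weight.
-/

section AdWeightSpace

attribute [local instance] LieRing.ofAssociativeRing

variable {K R : Type*} [CommRing K] [Ring R] [Algebra K R]

/-- The space of elements of weight `w` for the adjoint action of `L` on the associative
algebra `R`: the eigenspace of `ad L` for the eigenvalue `w`. -/
def adWeightSpace (L : R) (w : K) : Submodule K R :=
  (LieAlgebra.ad K R L).eigenspace w

theorem mem_adWeightSpace_iff {L x : R} {w : K} :
    x ∈ adWeightSpace L w ↔ L * x - x * L = w • x := by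
  rw [adWeightSpace, Module.End.mem_eigenspace_iff, LieAlgebra.ad_apply, Ring.lie_def]

theorem mul_mem_adWeightSpace {L x y : R} {v w : K} (hx : x ∈ adWeightSpace L v)
    (hy : y ∈ adWeightSpace L w) : x * y ∈ adWeightSpace L (v + w) := by
  rw [mem_adWeightSpace_iff] at hx hy ⊢
  calc L * (x * y) - x * y * L = (L * x - x * L) * y + x * (L * y - y * L) := by noncomm_ring
    _ = (v + w) • (x * y) := by rw [hx, hy, smul_mul_assoc, mul_smul_comm, add_smul]

theorem mem_adWeightSpace_end_iff {M : Type*} [AddCommGroup M] [Module K M]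
    {L f : Module.End K M} {w : K} :
    f ∈ adWeightSpace L w ↔ ∀ m, L (f m) = f (L m) + w • f m := by
  rw [mem_adWeightSpace_iff, sub_eq_iff_eq_add']
  exact LinearMap.ext_iff

end AdWeightSpace

theorem tder_single (m : ℤ) (c : ℂ) :
    tder (Finsupp.single m c) = Finsupp.single (m - 1) (m * c) := by
  simp [tder]

theorem tshift_single (k m : ℤ) (c : ℂ) :
    tshift k (Finsupp.single m c) = Finsupp.single (m + k) c := by
  simp [tshift]

theorem tshift_zero : tshift 0 = LinearMap.id := by
  ext1 m
  ext1
  simp [tshift_single]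

/-- The Euler operator `t∂_t` on `ℂ[t,t⁻¹]`. -/
def lauEuler : Module.End ℂ Lau := tshift 1 ∘ₗ tder

theorem lauEuler_single (m : ℤ) (c : ℂ) :
    lauEuler (Finsupp.single m c) = (m : ℂ) • Finsupp.single m c := by
  simp only [lauEuler, LinearMap.comp_apply, tder_single, tshift_single, sub_add_cancel,
    Finsupp.smul_single, smul_eq_mul]

theorem lauEuler_tshift (k : ℤ) (a : Lau) :
    lauEuler (tshift k a) = tshift k (lauEuler a) + (k : ℂ) • tshift k a := by
  induction a using Finsupp.induction_linear with
  | zero => simp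
  | add f g hf hg => simp only [map_add, hf, hg, smul_add]; abel
  | single m c =>
    simp only [tshift_single, lauEuler_single, map_smul, Int.cast_add, add_smul]

theorem lauEuler_tder (a : Lau) : lauEuler (tder a) = tder (lauEuler a) - tder a := by
  induction a using Finsupp.induction_linear with
  | zero => simp
  | add f g hf hg => simp only [map_add, hf, hg]; abel
  | single m c =>
    simp only [tder_single, lauEuler_single, map_smul, Int.cast_sub, Int.cast_one, sub_smul,
      one_smul]

section Components

variable (a b c d : Lau)

theorem Mt_apply (k : ℤ) :
    Mt k (a, b, c, d) = (tshift k a, tshift k b, tshift k c, tshift k d) := rfl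

theorem Dt_apply : Dt (a, b, c, d) = (tder a, tder b, tder c, tder d) := rfl

theorem Mθ1_apply : Mθ1 (a, b, c, d) = (0, a, 0, c) := rfl

theorem Dθ1_apply : Dθ1 (a, b, c, d) = (b, 0, d, 0) := rfl

theorem Mθ2_apply : Mθ2 (a, b, c, d) = (0, 0, a, -b) := rfl

theorem Dθ2_apply : Dθ2 (a, b, c, d) = (c, -d, 0, 0) := rfl

end Components

theorem Mt_zero : Mt 0 = 1 := by
  refine LinearMap.ext fun ⟨a, b, c, d⟩ => ?_
  simp only [Mt_apply, tshift_zero, LinearMap.id_apply, Module.End.one_apply]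

/-- The Euler operator `t∂_t + w₁θ₁∂₁ + w₂θ₂∂₂` of `A`, which gives the variables
`t, θ₁, θ₂` the weights `1, w₁, w₂`. -/
def eulerOp (w₁ w₂ : ℂ) : Module.End ℂ GA :=
  Mt 1 * Dt + w₁ • (Mθ1 * Dθ1) + w₂ • (Mθ2 * Dθ2)

theorem neg_Lop_zero_add_smul_Hop_zero (α β : ℂ) :
    -Lop α 0 + β • Hop 0 = eulerOp ((α + 1) / 2 - β) ((α + 1) / 2 + β) := by
  simp only [Lop, Hop, eulerOp, Mt_zero, one_mul, zero_add, Int.cast_zero]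
  module

section EulerWeights

variable (w₁ w₂ : ℂ)

theorem eulerOp_apply (a b c d : Lau) :
    eulerOp w₁ w₂ (a, b, c, d) =
      (lauEuler a, lauEuler b + w₁ • b, lauEuler c + w₂ • c, lauEuler d + (w₁ + w₂) • d) := by
  simp [eulerOp, lauEuler, Mt_apply, Dt_apply, Mθ1_apply, Dθ1_apply, Mθ2_apply, Dθ2_apply,
    add_smul, add_assoc]

theorem Mt_mem_adWeightSpace (k : ℤ) : Mt k ∈ adWeightSpace (eulerOp w₁ w₂) (k : ℂ) := by
  rw [mem_adWeightSpace_end_iff]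
  rintro ⟨a, b, c, d⟩
  simp only [Mt_apply, eulerOp_apply, lauEuler_tshift, map_add, map_smul, Prod.smul_mk,
    Prod.mk_add_mk, Prod.mk.injEq, true_and]
  refine ⟨?_, ?_, ?_⟩ <;> module

theorem Dt_mem_adWeightSpace : Dt ∈ adWeightSpace (eulerOp w₁ w₂) (-1 : ℂ) := by
  rw [mem_adWeightSpace_end_iff]
  rintro ⟨a, b, c, d⟩
  simp only [Dt_apply, eulerOp_apply, lauEuler_tder, map_add, map_smul, Prod.smul_mk,
    Prod.mk_add_mk, Prod.mk.injEq]
  refine ⟨?_, ?_, ?_, ?_⟩ <;> module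

theorem Mθ1_mem_adWeightSpace : Mθ1 ∈ adWeightSpace (eulerOp w₁ w₂) w₁ := by
  rw [mem_adWeightSpace_end_iff]
  rintro ⟨a, b, c, d⟩
  simp only [Mθ1_apply, eulerOp_apply, map_zero, smul_zero, add_zero, Prod.smul_mk,
    Prod.mk_add_mk, Prod.mk.injEq, true_and]
  module

theorem Dθ1_mem_adWeightSpace : Dθ1 ∈ adWeightSpace (eulerOp w₁ w₂) (-w₁) := by
  rw [mem_adWeightSpace_end_iff]
  rintro ⟨a, b, c, d⟩
  simp only [Dθ1_apply, eulerOp_apply, map_zero, smul_zero, add_zero, Prod.smul_mk,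
    Prod.mk_add_mk, Prod.mk.injEq, and_true, true_and]
  constructor <;> module

theorem Mθ2_mem_adWeightSpace : Mθ2 ∈ adWeightSpace (eulerOp w₁ w₂) w₂ := by
  rw [mem_adWeightSpace_end_iff]
  rintro ⟨a, b, c, d⟩
  simp only [Mθ2_apply, eulerOp_apply, map_zero, map_neg, smul_zero, add_zero, Prod.smul_mk,
    Prod.mk_add_mk, Prod.mk.injEq, true_and]
  module

theorem Dθ2_mem_adWeightSpace : Dθ2 ∈ adWeightSpace (eulerOp w₁ w₂) (-w₂) := by
  rw [mem_adWeightSpace_end_iff]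
  rintro ⟨a, b, c, d⟩
  simp only [Dθ2_apply, eulerOp_apply, map_zero, map_neg, smul_zero, add_zero, Prod.smul_mk,
    Prod.mk_add_mk, Prod.mk.injEq, and_true]
  constructor <;> module

end EulerWeights

section BasisWeights

variable (w₁ w₂ α : ℂ) (n : ℤ)

theorem Lop_mem_adWeightSpace : Lop α n ∈ adWeightSpace (eulerOp w₁ w₂) (n : ℂ) := by
  have hDt : Mt (n + 1) * Dt ∈ adWeightSpace (eulerOp w₁ w₂) (n : ℂ) := by
    convert mul_mem_adWeightSpace (Mt_mem_adWeightSpace w₁ w₂ (n + 1))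
      (Dt_mem_adWeightSpace w₁ w₂) using 2
    push_cast
    ring
  have hθ : Mt n * (Mθ1 * Dθ1 + Mθ2 * Dθ2) ∈ adWeightSpace (eulerOp w₁ w₂) (n : ℂ) := by
    have h₁ := mul_mem_adWeightSpace (Mθ1_mem_adWeightSpace w₁ w₂) (Dθ1_mem_adWeightSpace w₁ w₂)
    have h₂ := mul_mem_adWeightSpace (Mθ2_mem_adWeightSpace w₁ w₂) (Dθ2_mem_adWeightSpace w₁ w₂)
    rw [add_neg_cancel] at h₁ h₂
    convert mul_mem_adWeightSpace (Mt_mem_adWeightSpace w₁ w₂ n) (add_mem h₁ h₂) using 2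
    ring
  exact neg_mem (add_mem hDt (Submodule.smul_mem _ _ hθ))

theorem Eop_mem_adWeightSpace : Eop n ∈ adWeightSpace (eulerOp w₁ w₂) (n + w₂ - w₁) := by
  rw [sub_eq_add_neg]
  exact mul_mem_adWeightSpace (mul_mem_adWeightSpace (Mt_mem_adWeightSpace w₁ w₂ n)
    (Mθ2_mem_adWeightSpace w₁ w₂)) (Dθ1_mem_adWeightSpace w₁ w₂)

theorem Hop_mem_adWeightSpace : Hop n ∈ adWeightSpace (eulerOp w₁ w₂) (n : ℂ) := by
  have h₁ := mul_mem_adWeightSpace (mul_mem_adWeightSpace (Mt_mem_adWeightSpace w₁ w₂ n)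
    (Mθ1_mem_adWeightSpace w₁ w₂)) (Dθ1_mem_adWeightSpace w₁ w₂)
  have h₂ := mul_mem_adWeightSpace (mul_mem_adWeightSpace (Mt_mem_adWeightSpace w₁ w₂ n)
    (Mθ2_mem_adWeightSpace w₁ w₂)) (Dθ2_mem_adWeightSpace w₁ w₂)
  rw [add_neg_cancel_right] at h₁ h₂
  exact sub_mem h₂ h₁

theorem Fop_mem_adWeightSpace : Fop n ∈ adWeightSpace (eulerOp w₁ w₂) (n + w₁ - w₂) := by
  rw [sub_eq_add_neg]
  exact mul_mem_adWeightSpace (mul_mem_adWeightSpace (Mt_mem_adWeightSpace w₁ w₂ n)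
    (Mθ1_mem_adWeightSpace w₁ w₂)) (Dθ2_mem_adWeightSpace w₁ w₂)

theorem Mt_mul_Mθ1_mul_Mθ2_mem_adWeightSpace :
    Mt n * Mθ1 * Mθ2 ∈ adWeightSpace (eulerOp w₁ w₂) (n + w₁ + w₂) :=
  mul_mem_adWeightSpace (mul_mem_adWeightSpace (Mt_mem_adWeightSpace w₁ w₂ n)
    (Mθ1_mem_adWeightSpace w₁ w₂)) (Mθ2_mem_adWeightSpace w₁ w₂)

theorem hop_mem_adWeightSpace : hop α n ∈ adWeightSpace (eulerOp w₁ w₂) (n - 1 + w₂) := by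
  have hDt : Mt n * Mθ2 * Dt ∈ adWeightSpace (eulerOp w₁ w₂) (n - 1 + w₂) := by
    convert mul_mem_adWeightSpace (mul_mem_adWeightSpace (Mt_mem_adWeightSpace w₁ w₂ n)
      (Mθ2_mem_adWeightSpace w₁ w₂)) (Dt_mem_adWeightSpace w₁ w₂) using 2
    ring
  have hθ : Mt (n - 1) * Mθ1 * Mθ2 * Dθ1 ∈ adWeightSpace (eulerOp w₁ w₂) (n - 1 + w₂) := by
    convert mul_mem_adWeightSpace (Mt_mul_Mθ1_mul_Mθ2_mem_adWeightSpace w₁ w₂ (n - 1))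
      (Dθ1_mem_adWeightSpace w₁ w₂) using 2
    push_cast
    ring
  exact sub_mem hDt (Submodule.smul_mem _ _ hθ)

theorem pop_mem_adWeightSpace : pop n ∈ adWeightSpace (eulerOp w₁ w₂) (n + 1 - w₂) := by
  have h := mul_mem_adWeightSpace (Mt_mem_adWeightSpace w₁ w₂ (n + 1))
    (Dθ2_mem_adWeightSpace w₁ w₂)
  rw [Int.cast_add, Int.cast_one, ← sub_eq_add_neg] at h
  exact neg_mem h

theorem xop_mem_adWeightSpace : xop n ∈ adWeightSpace (eulerOp w₁ w₂) (n + 1 - w₁) := by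
  have h := mul_mem_adWeightSpace (Mt_mem_adWeightSpace w₁ w₂ (n + 1))
    (Dθ1_mem_adWeightSpace w₁ w₂)
  rwa [Int.cast_add, Int.cast_one, ← sub_eq_add_neg] at h

theorem yop_mem_adWeightSpace : yop α n ∈ adWeightSpace (eulerOp w₁ w₂) (n - 1 + w₁) := by
  have hDt : Mt n * Mθ1 * Dt ∈ adWeightSpace (eulerOp w₁ w₂) (n - 1 + w₁) := by
    convert mul_mem_adWeightSpace (mul_mem_adWeightSpace (Mt_mem_adWeightSpace w₁ w₂ n)
      (Mθ1_mem_adWeightSpace w₁ w₂)) (Dt_mem_adWeightSpace w₁ w₂) using 2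
    ring
  have hθ : Mt (n - 1) * Mθ1 * Mθ2 * Dθ2 ∈ adWeightSpace (eulerOp w₁ w₂) (n - 1 + w₁) := by
    convert mul_mem_adWeightSpace (Mt_mul_Mθ1_mul_Mθ2_mem_adWeightSpace w₁ w₂ (n - 1))
      (Dθ2_mem_adWeightSpace w₁ w₂) using 2
    push_cast
    ring
  exact add_mem hDt (Submodule.smul_mem _ _ hθ)

end BasisWeights

/-- For any `α ∈ ℂ`, the element `𝐋₀ = −ℒ₀^α + (1/2)(1−α)H₀` of
`S(2,α)` satisfies `[𝐋₀, s] = (deg s)·s` for every basis element `s` of `S'(2,α)`,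
where `deg ℒ_n^α = deg H_n = deg 𝔥_n^α = deg 𝔭_n = n`, `deg E_n = deg 𝔵_n = n+1−α`
and `deg F_n = deg 𝔶_n^α = n−1+α`: the grading `deg` of `S'(2,α)` by `ℤ ± α` is the
eigenvalue decomposition of `ad 𝐋₀`. -/
theorem grading_operator_of_s2alpha (alf : ℂ) (n : ℤ) :
    ((-Lop alf 0 + ((1 - alf) / 2) • Hop 0) * Lop alf n
        - Lop alf n * (-Lop alf 0 + ((1 - alf) / 2) • Hop 0) = (n : ℂ) • Lop alf n) ∧
    ((-Lop alf 0 + ((1 - alf) / 2) • Hop 0) * Hop n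
        - Hop n * (-Lop alf 0 + ((1 - alf) / 2) • Hop 0) = (n : ℂ) • Hop n) ∧
    ((-Lop alf 0 + ((1 - alf) / 2) • Hop 0) * hop alf n
        - hop alf n * (-Lop alf 0 + ((1 - alf) / 2) • Hop 0) = (n : ℂ) • hop alf n) ∧
    ((-Lop alf 0 + ((1 - alf) / 2) • Hop 0) * pop n
        - pop n * (-Lop alf 0 + ((1 - alf) / 2) • Hop 0) = (n : ℂ) • pop n) ∧
    ((-Lop alf 0 + ((1 - alf) / 2) • Hop 0) * Eop n
        - Eop n * (-Lop alf 0 + ((1 - alf) / 2) • Hop 0) = ((n : ℂ) + 1 - alf) • Eop n) ∧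
    ((-Lop alf 0 + ((1 - alf) / 2) • Hop 0) * xop n
        - xop n * (-Lop alf 0 + ((1 - alf) / 2) • Hop 0) = ((n : ℂ) + 1 - alf) • xop n) ∧
    ((-Lop alf 0 + ((1 - alf) / 2) • Hop 0) * Fop n
        - Fop n * (-Lop alf 0 + ((1 - alf) / 2) • Hop 0) = ((n : ℂ) - 1 + alf) • Fop n) ∧
    ((-Lop alf 0 + ((1 - alf) / 2) • Hop 0) * yop alf n
        - yop alf n * (-Lop alf 0 + ((1 - alf) / 2) • Hop 0) = ((n : ℂ) - 1 + alf) • yop alf n) := by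
  have hL₀ : -Lop alf 0 + ((1 - alf) / 2) • Hop 0 = eulerOp alf 1 := by
    rw [neg_Lop_zero_add_smul_Hop_zero]
    congr 1 <;> ring
  simp only [hL₀, ← mem_adWeightSpace_iff (K := ℂ) (R := Module.End ℂ GA)]
  refine ⟨?_, ?_, ?_, ?_, ?_, ?_, ?_, ?_⟩
  · exact Lop_mem_adWeightSpace alf 1 alf n
  · exact Hop_mem_adWeightSpace alf 1 n
  · simpa using hop_mem_adWeightSpace alf 1 alf n
  · simpa using pop_mem_adWeightSpace alf 1 n
  · exact Eop_mem_adWeightSpace alf 1 n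
  · exact xop_mem_adWeightSpace alf 1 n
  · rw [sub_add_eq_add_sub]
    exact Fop_mem_adWeightSpace alf 1 n
  · exact yop_mem_adWeightSpace alf 1 alf n
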